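/- arXiv:1812.10160 — 5 statements merged into one kernel-verified Lean document; each statement's English description precedes it below -/
import Mathlib

section
/- Let n₁, n₂, n₃ be nonnegative integers with n₃ ≥ 2, let g ∈ ℝ, and let S = {(w, x, y) ∈ ℝ^{n₁} × ℝ^{n₂} × ℝ^{n₃} : Σ_{i=1}^{n₁} wᵢ² − Σ_{j=1}^{n₂} xⱼ² + Σ_{k=1}^{n₃} yₖ = g and (w,x,y) ∈ P} for some set P. If (a, b, c) ∈ S and (a, b, c) lies in the topological interior of P, then (a, b, c) is not an extreme point of S. -/
/-!
With at least two linear variables there is a nonzero direction `d` in the `y`-space whose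
coordinates sum to zero. The defining equation is invariant along `d`, so it is only membership
in `P` that can obstruct moving from `p` along `±d`, and at an interior point of `P` it does not
do so for small steps. Hence `p` is the midpoint of a nondegenerate segment with ends in `S`.
-/

open Filter Topology

section Module

variable {𝕜 E : Type*} [Field 𝕜] [LinearOrder 𝕜] [IsStrictOrderedRing 𝕜]
  [AddCommGroup E] [Module 𝕜 E] {S : Set E} {p d : E}

theorem notMem_extremePoints_of_add_mem_of_sub_mem (hd : d ≠ 0) (hadd : p + d ∈ S)
    (hsub : p - d ∈ S) : p ∉ S.extremePoints 𝕜 := by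
  intro hp
  let : Invertible (2 : 𝕜) := invertibleOfNonzero two_ne_zero
  have hend : p + d = p := hp.2 hadd hsub (mem_openSegment_add_sub p d)
  exact hd (add_eq_left.mp hend)

variable [TopologicalSpace 𝕜] [OrderTopology 𝕜]

theorem notMem_extremePoints_of_eventually_add_smul_mem (hd : d ≠ 0)
    (hS : ∀ᶠ t : 𝕜 in 𝓝 0, p + t • d ∈ S) : p ∉ S.extremePoints 𝕜 := by
  have hneg : Tendsto (fun t : 𝕜 ↦ -t) (𝓝 0) (𝓝 0) :=
    continuous_neg.tendsto' 0 0 neg_zero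
  have hboth : ∀ᶠ t : 𝕜 in 𝓝[>] 0, p + t • d ∈ S ∧ p + -t • d ∈ S :=
    (hS.and (hneg.eventually hS)).filter_mono nhdsWithin_le_nhds
  obtain ⟨t, ⟨hadd, hsub⟩, ht⟩ := (hboth.and self_mem_nhdsWithin).exists
  rw [neg_smul, ← sub_eq_add_neg] at hsub
  exact notMem_extremePoints_of_add_mem_of_sub_mem (smul_ne_zero (ne_of_gt ht) hd) hadd hsub

theorem notMem_extremePoints_levelSet_of_mem_interior {α : Type*} [TopologicalSpace E]
    [ContinuousAdd E] [ContinuousSMul 𝕜 E] {f : E → α} {c : α} {P : Set E} (hd : d ≠ 0)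
    (hf : ∀ t : 𝕜, f (p + t • d) = f p) (hpP : p ∈ interior P) :
    p ∉ {q | f q = c ∧ q ∈ P}.extremePoints 𝕜 := by
  intro hp
  have hline : Tendsto (fun t : 𝕜 ↦ p + t • d) (𝓝 0) (𝓝 p) :=
    Continuous.tendsto' (by fun_prop) 0 p (by rw [zero_smul, add_zero])
  have hmem : ∀ᶠ t : 𝕜 in 𝓝 0, p + t • d ∈ {q | f q = c ∧ q ∈ P} :=
    (hline.eventually (mem_interior_iff_mem_nhds.mp hpP)).mono
      fun t ht ↦ ⟨(hf t).trans hp.1.1, ht⟩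
  exact notMem_extremePoints_of_eventually_add_smul_mem hd hmem hp

end Module

theorem ker_sum_proj_ne_bot {K ι : Type*} [Field K] [Fintype ι] [Nontrivial ι] :
    (∑ i, LinearMap.proj i : (ι → K) →ₗ[K] K).ker ≠ ⊥ :=
  LinearMap.ker_ne_bot_of_finrank_lt <| by
    simpa only [Module.finrank_self, Module.finrank_fintype_fun_eq_card] using
      Fintype.one_lt_card (α := ι)

theorem not_extremePoint_of_mem_interior_quadric_two_linear_general {𝕜 W X Y M : Type*}
    [Field 𝕜] [LinearOrder 𝕜] [IsStrictOrderedRing 𝕜] [TopologicalSpace 𝕜] [OrderTopology 𝕜]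
    [AddCommGroup W] [Module 𝕜 W] [TopologicalSpace W] [ContinuousAdd W] [ContinuousSMul 𝕜 W]
    [AddCommGroup X] [Module 𝕜 X] [TopologicalSpace X] [ContinuousAdd X] [ContinuousSMul 𝕜 X]
    [AddCommGroup Y] [Module 𝕜 Y] [TopologicalSpace Y] [ContinuousAdd Y] [ContinuousSMul 𝕜 Y]
    [AddCommGroup M] [Module 𝕜 M] (f : W → X → M) {ℓ : Y →ₗ[𝕜] M} (hℓ : ℓ.ker ≠ ⊥) (c : M)
    {P : Set (W × X × Y)} {p : W × X × Y} (hpP : p ∈ interior P) :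
    p ∉ {q : W × X × Y | f q.1 q.2.1 + ℓ q.2.2 = c ∧ q ∈ P}.extremePoints 𝕜 := by
  obtain ⟨v, hv, hv0⟩ := Submodule.exists_mem_ne_zero_of_ne_bot hℓ
  have hd : ((0, 0, v) : W × X × Y) ≠ 0 := by simpa using hv0
  have hinv (t : 𝕜) : f (p + t • (0, 0, v)).1 (p + t • (0, 0, v)).2.1 +
      ℓ (p + t • (0, 0, v)).2.2 = f p.1 p.2.1 + ℓ p.2.2 := by
    simp [LinearMap.mem_ker.mp hv]
  exact notMem_extremePoints_levelSet_of_mem_interior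
    (f := fun q : W × X × Y ↦ f q.1 q.2.1 + ℓ q.2.2) hd hinv hpP

/-- Let `S = {(w,x,y) : Σ wᵢ² − Σ xⱼ² + Σ yₖ = g, (w,x,y) ∈ P}` with `n₃ ≥ 2` linear
variables.  Any point of `S` lying in the topological interior of `P` is not an
extreme point of `S`. -/
theorem not_extremePoint_of_mem_interior_quadric_two_linear
    (n₁ n₂ n₃ : ℕ) (hn₃ : 2 ≤ n₃) (g : ℝ)
    (P : Set ((Fin n₁ → ℝ) × (Fin n₂ → ℝ) × (Fin n₃ → ℝ)))
    (S : Set ((Fin n₁ → ℝ) × (Fin n₂ → ℝ) × (Fin n₃ → ℝ)))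
    (hS : S = {p | (∑ i, (p.1 i) ^ 2) - (∑ j, (p.2.1 j) ^ 2) + (∑ k, p.2.2 k) = g ∧ p ∈ P})
    (p : (Fin n₁ → ℝ) × (Fin n₂ → ℝ) × (Fin n₃ → ℝ))
    (hpS : p ∈ S) (hpP : p ∈ interior P) :
    p ∉ S.extremePoints ℝ := by
  have : Nontrivial (Fin n₃) := Fin.nontrivial_iff_two_le.mpr hn₃
  simpa [hS] using not_extremePoint_of_mem_interior_quadric_two_linear_general
    (fun (w : Fin n₁ → ℝ) (x : Fin n₂ → ℝ) ↦ ∑ i, w i ^ 2 - ∑ j, x j ^ 2)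
    (ker_sum_proj_ne_bot (K := ℝ) (ι := Fin n₃)) g hpP
end

section
/- Let n₁, n₂ be positive integers, let g ∈ ℝ, and let S = {(w, x, y) ∈ ℝ^{n₁} × ℝ^{n₂} × ℝ : Σ_{i=1}^{n₁} wᵢ² − Σ_{j=1}^{n₂} xⱼ² + y = g and (w,x,y) ∈ P} for some set P. If (a, b, c) ∈ S and (a, b, c) lies in the topological interior of P, then (a, b, c) is not an extreme point of S. -/
/-!
A quadratic map `Q` vanishing at some `v ≠ 0` is affine along every line with direction `v`,
and the linear variable `y` can absorb this affine variation. So the quadric `Q x + y = g` is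
ruled: through each of its points runs a whole line, and a short segment of that line around an
interior point of `P` stays in `P`, which rules out extremality. For `∑ wᵢ² - ∑ xⱼ²` one may take
`v = (eᵢ, eⱼ)`.
-/

open Filter Topology

theorem notMem_extremePoints_of_eventually_add_smul_mem_s7 {𝕜 E : Type*} [Field 𝕜]
    [LinearOrder 𝕜] [IsStrictOrderedRing 𝕜] [TopologicalSpace 𝕜] [OrderTopology 𝕜]
    [AddCommGroup E] [Module 𝕜 E] {S : Set E} {p d : E} (hd : d ≠ 0)
    (hS : ∀ᶠ t in 𝓝 (0 : 𝕜), p + t • d ∈ S) : p ∉ S.extremePoints 𝕜 := by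
  intro hp
  have hS_neg : ∀ᶠ t in 𝓝 (0 : 𝕜), p + -t • d ∈ S :=
    (continuous_neg.tendsto' 0 0 neg_zero).eventually hS
  obtain ⟨t, ⟨hadd, hsub⟩, ht⟩ : ∃ t : 𝕜, (p + t • d ∈ S ∧ p + -t • d ∈ S) ∧ 0 < t :=
    (((hS.and hS_neg).filter_mono nhdsWithin_le_nhds).and
      (self_mem_nhdsWithin : Set.Ioi 0 ∈ 𝓝[>] (0 : 𝕜))).exists
  rw [neg_smul, ← sub_eq_add_neg] at hsub
  have hfix : p + t • d = p := hp.2 hadd hsub (mem_openSegment_add_sub p (t • d))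
  exact smul_ne_zero ht.ne' hd (add_eq_left.mp hfix)

theorem eventually_add_smul_mem_of_mem_interior {R E : Type*} [Semiring R] [TopologicalSpace R]
    [AddCommMonoid E] [Module R E] [TopologicalSpace E] [ContinuousAdd E] [ContinuousSMul R E]
    {P : Set E} {p : E} (hp : p ∈ interior P) (d : E) :
    ∀ᶠ t in 𝓝 (0 : R), p + t • d ∈ P := by
  have hline : Tendsto (fun t : R ↦ p + t • d) (𝓝 0) (𝓝 p) :=
    (by fun_prop : Continuous fun t : R ↦ p + t • d).tendsto' 0 p (by simp)
  exact hline.eventually (mem_interior_iff_mem_nhds.mp hp)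

section QuadraticMap

variable {R M N : Type*} [CommRing R] [AddCommGroup M] [Module R M] [AddCommGroup N] [Module R N]

theorem quadraticMap_add_smul_of_isotropic {Q : QuadraticMap R M N} {v : M} (hv : Q v = 0)
    (x : M) (t : R) : Q (x + t • v) = Q x + t • QuadraticMap.polar Q x v := by
  rw [QuadraticMap.map_add Q, QuadraticMap.map_smul, QuadraticMap.polar_smul_right, hv, smul_zero,
    add_zero]

theorem exists_ne_zero_forall_quadraticMap_add_smul_eq {Q : QuadraticMap R M N}
    (hQ : ¬ Q.Anisotropic) (z : M × N) :
    ∃ d : M × N, d ≠ 0 ∧ ∀ t : R, Q (z + t • d).1 + (z + t • d).2 = Q z.1 + z.2 := by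
  obtain ⟨v, hv_ne, hv⟩ := (QuadraticMap.not_anisotropic_iff_exists Q).mp hQ
  refine ⟨(v, -QuadraticMap.polar Q z.1 v), fun hd ↦ hv_ne (congrArg Prod.fst hd), fun t ↦ ?_⟩
  simp only [Prod.fst_add, Prod.snd_add, Prod.smul_fst, Prod.smul_snd,
    quadraticMap_add_smul_of_isotropic hv]
  module

end QuadraticMap

/-- The map `L` reads off the quadratic and the linear coordinates, so that the ambient space may
be bracketed differently from `M × N`, or carry further coordinates. -/
theorem not_extremePoint_of_mem_interior_quadric_one_linear_general {𝕜 E M N : Type*}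
    [Field 𝕜] [LinearOrder 𝕜] [IsStrictOrderedRing 𝕜] [TopologicalSpace 𝕜] [OrderTopology 𝕜]
    [AddCommGroup E] [Module 𝕜 E] [TopologicalSpace E] [ContinuousAdd E] [ContinuousSMul 𝕜 E]
    [AddCommGroup M] [Module 𝕜 M] [AddCommGroup N] [Module 𝕜 N]
    {Q : QuadraticMap 𝕜 M N} (hQ : ¬ Q.Anisotropic)
    {L : E →ₗ[𝕜] M × N} (hL : Function.Surjective L) (g : N) {P : Set E} {p : E}
    (hp : p ∈ interior P) :
    p ∉ {z | Q (L z).1 + (L z).2 = g ∧ z ∈ P}.extremePoints 𝕜 := by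
  intro hext
  obtain ⟨d, hd, hline⟩ := exists_ne_zero_forall_quadraticMap_add_smul_eq hQ (L p)
  obtain ⟨e, rfl⟩ := hL d
  have hquadric (t : 𝕜) : Q (L (p + t • e)).1 + (L (p + t • e)).2 = g := by
    rw [map_add, map_smul, hline, hext.1.1]
  have hmem : ∀ᶠ t in 𝓝 (0 : 𝕜), p + t • e ∈ {z | Q (L z).1 + (L z).2 = g ∧ z ∈ P} :=
    (eventually_add_smul_mem_of_mem_interior hp e).mono fun t ht ↦ ⟨hquadric t, ht⟩
  exact notMem_extremePoints_of_eventually_add_smul_mem_s7 (ne_zero_of_map hd) hmem hext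

section SumSqSubSumSq

variable (R ι κ : Type*) [CommRing R] [Fintype ι] [Fintype κ]

/-- The diagonal quadratic form `∑ wᵢ² - ∑ xⱼ²` in the variables `(w, x) ∈ R^ι × R^κ`, assembled
from weighted sums of squares with weights `1` and `-1`. -/
def sumSqSubSumSq : QuadraticForm R ((ι → R) × (κ → R)) :=
  (QuadraticMap.weightedSumSquares R (1 : ι → R)).prod
    (QuadraticMap.weightedSumSquares R (-1 : κ → R))

variable {R ι κ}

theorem sumSqSubSumSq_apply (z : (ι → R) × (κ → R)) :
    sumSqSubSumSq R ι κ z = ∑ i, z.1 i ^ 2 - ∑ j, z.2 j ^ 2 := by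
  simp [sumSqSubSumSq, QuadraticMap.weightedSumSquares_apply, sq, sub_eq_add_neg]

theorem not_anisotropic_sumSqSubSumSq [Nontrivial R] [Nonempty ι] [Nonempty κ] :
    ¬ (sumSqSubSumSq R ι κ).Anisotropic := by
  classical
  let i : ι := Classical.arbitrary ι
  let j : κ := Classical.arbitrary κ
  refine (QuadraticMap.not_anisotropic_iff_exists _).mpr
    ⟨(Pi.single i 1, Pi.single j 1), fun h ↦ ?_, ?_⟩
  · exact Pi.single_ne_zero_iff.mpr one_ne_zero (congrArg Prod.fst h)
  · simp [sumSqSubSumSq_apply, Pi.single_apply]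

end SumSqSubSumSq

/-- Let `S = {(w,x,y) ∈ ℝ^{n₁} × ℝ^{n₂} × ℝ : Σ wᵢ² − Σ xⱼ² + y = g, (w,x,y) ∈ P}` with
`n₁, n₂ ≥ 1` and exactly one linear variable.  Any point of `S` lying in the topological
interior of `P` is not an extreme point of `S`. -/
theorem not_extremePoint_of_mem_interior_quadric_one_linear
    (n₁ n₂ : ℕ) (hn₁ : 1 ≤ n₁) (hn₂ : 1 ≤ n₂) (g : ℝ)
    (P : Set ((Fin n₁ → ℝ) × (Fin n₂ → ℝ) × ℝ))
    (S : Set ((Fin n₁ → ℝ) × (Fin n₂ → ℝ) × ℝ))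
    (hS : S = {p | (∑ i, (p.1 i) ^ 2) - (∑ j, (p.2.1 j) ^ 2) + p.2.2 = g ∧ p ∈ P})
    (p : (Fin n₁ → ℝ) × (Fin n₂ → ℝ) × ℝ)
    (hpS : p ∈ S) (hpP : p ∈ interior P) :
    p ∉ S.extremePoints ℝ := by
  have : Nonempty (Fin n₁) := Fin.pos_iff_nonempty.mp hn₁
  have : Nonempty (Fin n₂) := Fin.pos_iff_nonempty.mp hn₂
  let regroup := (LinearEquiv.prodAssoc ℝ (Fin n₁ → ℝ) (Fin n₂ → ℝ) ℝ).symm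
  simpa [hS, regroup, LinearEquiv.prodAssoc, sumSqSubSumSq_apply] using
    not_extremePoint_of_mem_interior_quadric_one_linear_general
      not_anisotropic_sumSqSubSumSq (L := regroup.toLinearMap) regroup.surjective g hpP
end

section
/- Let n₁ ≥ 2 and n₂ ≥ 1 be integers and g ≥ 0. Suppose (a, b) ∈ ℝ^{n₁} × ℝ^{n₂} satisfies Σ_{i=1}^{n₁} aᵢ² − Σ_{j=1}^{n₂} bⱼ² = g and (a, b) ≠ 0. Then there exists (u, v) ∈ ℝ^{n₁} × ℝ^{n₂} with (u, v) ≠ 0 such that for every λ ∈ ℝ, Σ_{i=1}^{n₁} (aᵢ + λuᵢ)² − Σ_{j=1}^{n₂} (bⱼ + λvⱼ)² = g. That is, the straight line through (a,b) in direction (u,v) is entirely contained in the surface {(w,x) : Σ wᵢ² − Σ xⱼ² = g}. -/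
/-!
The line through `(a, b)` in direction `(u, v)` stays on a level set of `‖w‖² - ‖x‖²` as soon as
`‖u‖ = ‖v‖` and `⟪a, u⟫ = ⟪b, v⟫`. On the level set of `g ≥ 0` we have `‖b‖ ≤ ‖a‖`, so by
Cauchy–Schwarz `|⟪b, v⟫| ≤ ‖a‖ ‖v‖` for every `v`. The sphere of radius `‖v‖` is connected in
dimension at least two, and on it `⟪a, ·⟫` takes the values `±‖a‖ ‖v‖`, hence also `⟪b, v⟫`.
-/

open scoped RealInnerProductSpace

section Line

variable {E F : Type*} [SeminormedAddCommGroup E] [InnerProductSpace ℝ E]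
  [SeminormedAddCommGroup F] [InnerProductSpace ℝ F]

theorem norm_add_smul_sq_sub_norm_add_smul_sq {a u : E} {b v : F} (hnorm : ‖u‖ = ‖v‖)
    (hinner : ⟪a, u⟫ = ⟪b, v⟫) (l : ℝ) :
    ‖a + l • u‖ ^ 2 - ‖b + l • v‖ ^ 2 = ‖a‖ ^ 2 - ‖b‖ ^ 2 := by
  simp only [norm_add_sq_real, real_inner_smul_right, norm_smul, hnorm, hinner]
  ring

end Line

section Sphere

variable {E : Type*} [NormedAddCommGroup E] [InnerProductSpace ℝ E]

theorem exists_norm_eq_inner_eq_norm_mul [Nontrivial E] (a : E) {r : ℝ} (hr : 0 ≤ r) :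
    ∃ u : E, ‖u‖ = r ∧ ⟪a, u⟫ = ‖a‖ * r := by
  rcases eq_or_ne a 0 with rfl | ha
  · obtain ⟨u, hu⟩ := exists_norm_eq E hr
    exact ⟨u, hu, by simp⟩
  · have ha' : ‖a‖ ≠ 0 := norm_ne_zero_iff.mpr ha
    refine ⟨(r / ‖a‖) • a, ?_, ?_⟩
    · rw [norm_smul, Real.norm_of_nonneg (by positivity), div_mul_cancel₀ r ha']
    · rw [real_inner_smul_right, real_inner_self_eq_norm_sq]
      field_simp

theorem exists_norm_eq_inner_eq (hE : 1 < Module.rank ℝ E) {a : E} {r t : ℝ} (hr : 0 ≤ r)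
    (ht : |t| ≤ ‖a‖ * r) : ∃ u : E, ‖u‖ = r ∧ ⟪a, u⟫ = t := by
  have : Nontrivial E := rank_pos_iff_nontrivial.mp (zero_lt_one.trans hE)
  obtain ⟨w, hw, haw⟩ := exists_norm_eq_inner_eq_norm_mul a hr
  have hw_mem : w ∈ Metric.sphere (0 : E) r := mem_sphere_zero_iff_norm.mpr hw
  have hnegw_mem : -w ∈ Metric.sphere (0 : E) r := by simpa using hw
  have ht_mem : t ∈ Set.Icc ⟪a, -w⟫ ⟪a, w⟫ := by
    rw [inner_neg_right, haw]
    exact abs_le.mp ht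
  have hcont : ContinuousOn (fun u ↦ ⟪a, u⟫) (Metric.sphere (0 : E) r) := by fun_prop
  obtain ⟨u, hu, hau⟩ :=
    (isPreconnected_sphere hE 0 r).intermediate_value hnegw_mem hw_mem hcont ht_mem
  exact ⟨u, mem_sphere_zero_iff_norm.mp hu, hau⟩

end Sphere

section Ruling

variable {E F : Type*} [NormedAddCommGroup E] [InnerProductSpace ℝ E]
  [SeminormedAddCommGroup F] [InnerProductSpace ℝ F]

theorem exists_forall_norm_add_smul_sq_sub_eq (hE : 1 < Module.rank ℝ E) {a : E} {b : F}
    (hba : ‖b‖ ≤ ‖a‖) (v : F) :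
    ∃ u : E, ∀ l : ℝ, ‖a + l • u‖ ^ 2 - ‖b + l • v‖ ^ 2 = ‖a‖ ^ 2 - ‖b‖ ^ 2 := by
  have hbv : |⟪b, v⟫| ≤ ‖a‖ * ‖v‖ := (abs_real_inner_le_norm b v).trans (by gcongr)
  obtain ⟨u, hnorm, hinner⟩ := exists_norm_eq_inner_eq hE (norm_nonneg v) hbv
  exact ⟨u, norm_add_smul_sq_sub_norm_add_smul_sq hnorm hinner⟩

theorem quadric_ruled_through_nonzero_point_general [Nontrivial F] (hE : 1 < Module.rank ℝ E)
    {g : ℝ} (hg : 0 ≤ g) {a : E} {b : F} (hab : ‖a‖ ^ 2 - ‖b‖ ^ 2 = g) :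
    ∃ (u : E) (v : F), (u, v) ≠ 0 ∧ ∀ l : ℝ, ‖a + l • u‖ ^ 2 - ‖b + l • v‖ ^ 2 = g := by
  have hba : ‖b‖ ≤ ‖a‖ := le_of_sq_le_sq (by linarith) (norm_nonneg a)
  obtain ⟨v, hv⟩ := exists_ne (0 : F)
  obtain ⟨u, hu⟩ := exists_forall_norm_add_smul_sq_sub_eq hE hba v
  exact ⟨u, v, fun huv ↦ hv (congrArg Prod.snd huv), fun l ↦ (hu l).trans hab⟩

end Ruling

/-- The quadric `{(w,x) : Σ wᵢ² − Σ xⱼ² = g}` with `g ≥ 0`, `n₁ ≥ 2`, `n₂ ≥ 1` is ruled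
through every nonzero point: if `(a,b)` lies on the quadric and `(a,b) ≠ 0`, then there is
a nonzero direction `(u,v)` such that the whole line `(a,b) + λ(u,v)` lies on the quadric. -/
theorem quadric_ruled_through_nonzero_point
    (n₁ n₂ : ℕ) (hn₁ : 2 ≤ n₁) (hn₂ : 1 ≤ n₂) (g : ℝ) (hg : 0 ≤ g)
    (a : Fin n₁ → ℝ) (b : Fin n₂ → ℝ)
    (hab : (∑ i, (a i) ^ 2) - (∑ j, (b j) ^ 2) = g)
    (hne : (a, b) ≠ 0) :
    ∃ (u : Fin n₁ → ℝ) (v : Fin n₂ → ℝ), (u, v) ≠ 0 ∧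
      ∀ l : ℝ, (∑ i, (a i + l * u i) ^ 2) - (∑ j, (b j + l * v j) ^ 2) = g := by
  have : NeZero n₂ := ⟨by lia⟩
  have hrank : 1 < Module.rank ℝ (EuclideanSpace ℝ (Fin n₁)) :=
    Module.one_lt_rank_of_one_lt_finrank (by rwa [finrank_euclideanSpace_fin])
  obtain ⟨u, v, huv, hline⟩ := quadric_ruled_through_nonzero_point_general hrank hg
    (a := WithLp.toLp 2 a) (b := WithLp.toLp 2 b)
    (by simpa only [EuclideanSpace.real_norm_sq_eq] using hab)
  refine ⟨u.ofLp, v.ofLp, by simpa using huv, fun l ↦ ?_⟩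
  simpa [EuclideanSpace.real_norm_sq_eq] using hline l
end

section
/- Let G ⊆ ℝⁿ be a convex set and f : ℝⁿ → ℝ a continuous function. Then conv(G ∩ {x : f(x) = 0}) = conv(G ∩ {x : f(x) ≤ 0}) ∩ conv(G ∩ {x : f(x) ≥ 0}). -/
/-!
Let `x` lie in both hulls on the right, say with `0 ≤ f x`. By the intermediate value theorem every
segment from `x` to a point of `G ∩ {f ≤ 0}` meets `G ∩ {f = 0}`. If `x` were outside
`conv(G ∩ {f = 0})`, Stone's separation theorem would give a convex set `D ⊇ G ∩ {f = 0}` with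
convex complement containing `x`. No point `y` of `G ∩ {f ≤ 0}` could lie in `Dᶜ`, which would then
contain the whole segment from `x` to `y`; so `x ∈ conv(G ∩ {f ≤ 0}) ⊆ D`, a contradiction.
-/

theorem mem_convexHull_of_forall_segment_inter_nonempty {𝕜 E : Type*} [Field 𝕜] [LinearOrder 𝕜]
    [IsStrictOrderedRing 𝕜] [AddCommGroup E] [Module 𝕜 E] {s t : Set E} {x : E}
    (hx : x ∈ convexHull 𝕜 s) (h : ∀ y ∈ s, (segment 𝕜 x y ∩ t).Nonempty) :
    x ∈ convexHull 𝕜 t := by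
  by_contra hxt
  obtain ⟨D, hD, hDc, htD, hxD⟩ := exists_convex_convex_compl_subset (convex_convexHull 𝕜 t)
    (convex_singleton x) (Set.disjoint_singleton_right.2 hxt)
  have hxDc : x ∈ Dᶜ := hxD rfl
  have hsD : s ⊆ D := by
    intro y hy
    by_contra hyD
    obtain ⟨z, hz, hzt⟩ := h y hy
    exact hDc.segment_subset hxDc hyD hz (htD (subset_convexHull 𝕜 t hzt))
  exact hxDc (convexHull_min hsD hD hx)

section LevelSet

variable {E α : Type*} [AddCommGroup E] [Module ℝ E] [TopologicalSpace E] [ContinuousAdd E]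
  [ContinuousSMul ℝ E] [LinearOrder α] [TopologicalSpace α] [OrderClosedTopology α]
  {G : Set E} {f : E → α} {c : α} {x y : E}

theorem exists_mem_segment_eq_of_continuousOn (hf : ContinuousOn f (segment ℝ x y))
    (hy : f y ≤ c) (hx : c ≤ f x) : ∃ z ∈ segment ℝ x y, f z = c :=
  (convex_segment x y).isPreconnected.intermediate_value (right_mem_segment ℝ x y)
    (left_mem_segment ℝ x y) hf ⟨hy, hx⟩

theorem mem_convexHull_inter_eq_of_mem_convexHull_inter_le (hG : Convex ℝ G)
    (hf : ContinuousOn f G) (hx : x ∈ convexHull ℝ (G ∩ {y | f y ≤ c})) (hcx : c ≤ f x) :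
    x ∈ convexHull ℝ (G ∩ {y | f y = c}) := by
  have hxG : x ∈ G := convexHull_min Set.inter_subset_left hG hx
  refine mem_convexHull_of_forall_segment_inter_nonempty hx fun y ⟨hyG, hyc⟩ ↦ ?_
  have hseg : segment ℝ x y ⊆ G := hG.segment_subset hxG hyG
  obtain ⟨z, hz, hzc⟩ := exists_mem_segment_eq_of_continuousOn (hf.mono hseg) hyc hcx
  exact ⟨z, hz, hseg hz, hzc⟩

theorem convexHull_inter_zero_set_eq_general (hG : Convex ℝ G) (hf : ContinuousOn f G) (c : α) :
    convexHull ℝ (G ∩ {x | f x = c}) =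
      convexHull ℝ (G ∩ {x | f x ≤ c}) ∩ convexHull ℝ (G ∩ {x | c ≤ f x}) := by
  apply Set.Subset.antisymm
  · exact Set.subset_inter (convexHull_mono fun x hx ↦ ⟨hx.1, hx.2.le⟩)
      (convexHull_mono fun x hx ↦ ⟨hx.1, hx.2.ge⟩)
  · rintro x ⟨hle, hge⟩
    rcases le_total c (f x) with hcx | hxc
    · exact mem_convexHull_inter_eq_of_mem_convexHull_inter_le hG hf hle hcx
    · exact mem_convexHull_inter_eq_of_mem_convexHull_inter_le (α := αᵒᵈ) hG hf hge hxc

end LevelSet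

/-- For a convex set `G ⊆ ℝⁿ` and a continuous function `f : ℝⁿ → ℝ`,
`conv(G ∩ {f = 0}) = conv(G ∩ {f ≤ 0}) ∩ conv(G ∩ {f ≥ 0})`. -/
theorem convexHull_inter_zero_set_eq
    (n : ℕ) (G : Set (Fin n → ℝ)) (hG : Convex ℝ G)
    (f : (Fin n → ℝ) → ℝ) (hf : Continuous f) :
    convexHull ℝ (G ∩ {x | f x = 0}) =
      convexHull ℝ (G ∩ {x | f x ≤ 0}) ∩ convexHull ℝ (G ∩ {x | 0 ≤ f x}) :=
  convexHull_inter_zero_set_eq_general hG hf.continuousOn 0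
end

section
/- Let P ⊆ ℝⁿ be a polytope (the convex hull of a finite set of points) and let f : ℝⁿ → ℝ be a convex function. Then conv({x ∈ P : f(x) ≥ 0}) is a polytope, i.e., there exists a finite set W ⊆ ℝⁿ with conv({x ∈ P : f(x) ≥ 0}) = conv(W). -/
/-!
Fix a convex `f` on `conv V` and a level `r`. On a segment, the points with `r ≤ f` lie in the hull
of at most two of them, because `f` is upper semicontinuous there. Doing this on `[v, w]` for all
`v, w ∈ V` gives a finite set `W ⊆ {r ≤ f}`. If some `x` with `r ≤ f x` were outside `conv W`,
a linear functional `g` would satisfy `g x < g y` for all `y ∈ W`. The slice `{g = g x}` of `conv V`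
is the convex hull of the slices of the segments `[v, w]`, and these contain no point of `conv W`,
so `f < r` on them. By convexity `f < r` on the whole slice, which contains `x`.
-/

section HyperplaneSlice

theorem sum_product_smul_smul_sub {R E ι : Type*} [CommRing R] [AddCommGroup E] [Module R E]
    (s t : Finset ι) (l d : ι → R) (z : ι → E)
    (h : ∑ i ∈ s, l i * d i + ∑ j ∈ t, l j * d j = 0) :
    ∑ p ∈ s ×ˢ t, (l p.1 * l p.2) • (d p.1 • z p.2 - d p.2 • z p.1) =
      (∑ i ∈ s, l i * d i) • (∑ i ∈ s, l i • z i + ∑ j ∈ t, l j • z j) :=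
  calc
    _ = ∑ i ∈ s, ∑ j ∈ t,
          ((l i * d i) • (l j • z j) - (l j * d j) • (l i • z i)) := by
      rw [Finset.sum_product]
      refine Finset.sum_congr rfl fun i _ ↦ Finset.sum_congr rfl fun j _ ↦ ?_
      module
    _ = (∑ i ∈ s, l i * d i) • ∑ j ∈ t, l j • z j -
          (∑ j ∈ t, l j * d j) • ∑ i ∈ s, l i • z i := by
      simp only [Finset.sum_sub_distrib, ← Finset.smul_sum, ← Finset.sum_smul]
    _ = _ := by
      rw [eq_neg_of_add_eq_zero_right h]
      module

variable {𝕜 E : Type*} [Field 𝕜] [LinearOrder 𝕜] [IsStrictOrderedRing 𝕜] [AddCommGroup E]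
  [Module 𝕜 E]

-- `hcross` says, with the denominator cleared, that the zero on `[z i, z j]` of the affine function
-- with values `d i` and `d j` at the endpoints lies in `C`.
theorem sum_add_sum_mem_of_crossings_mem {ι : Type*} {s t : Finset ι} {l d : ι → 𝕜} {z : ι → E}
    {C : Set E} (hC : Convex 𝕜 C) (hs : s.Nonempty)
    (hls : ∀ i ∈ s, 0 < l i) (hlt : ∀ j ∈ t, 0 ≤ l j)
    (hl : ∑ i ∈ s, l i + ∑ j ∈ t, l j = 1) (hds : ∀ i ∈ s, 0 < d i) (hdt : ∀ j ∈ t, d j ≤ 0)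
    (hd : ∑ i ∈ s, l i * d i + ∑ j ∈ t, l j * d j = 0)
    (hcross : ∀ i ∈ s, ∀ j ∈ t, ∃ y ∈ C, (d i - d j) • y = d i • z j - d j • z i) :
    ∑ i ∈ s, l i • z i + ∑ j ∈ t, l j • z j ∈ C := by
  have : Nonempty E := ⟨0⟩
  choose! y hyC hy using hcross
  set M := ∑ i ∈ s, l i * d i
  have hM : 0 < M := Finset.sum_pos (fun i hi ↦ mul_pos (hls i hi) (hds i hi)) hs
  have hweights : ∑ p ∈ s ×ˢ t, l p.1 * l p.2 * (d p.1 - d p.2) = M := by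
    simpa only [smul_eq_mul, mul_one, hl] using
      sum_product_smul_smul_sub s t l d (fun _ ↦ (1 : 𝕜)) hd
  have hcenter : (s ×ˢ t).centerMass (fun p ↦ l p.1 * l p.2 * (d p.1 - d p.2))
      (fun p ↦ y p.1 p.2) = ∑ i ∈ s, l i • z i + ∑ j ∈ t, l j • z j := by
    rw [Finset.centerMass, hweights, inv_smul_eq_iff₀ hM.ne',
      ← sum_product_smul_smul_sub s t l d z hd]
    refine Finset.sum_congr rfl fun p hp ↦ ?_
    obtain ⟨hi, hj⟩ := Finset.mem_product.1 hp
    rw [mul_smul, hy _ hi _ hj]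
  rw [← hcenter]
  refine hC.centerMass_mem (fun p hp ↦ ?_) (hM.trans_eq hweights.symm) fun p hp ↦ ?_
  all_goals obtain ⟨hi, hj⟩ := Finset.mem_product.1 hp
  · exact mul_nonneg (mul_nonneg (hls _ hi).le (hlt _ hj))
      (sub_nonneg.2 ((hdt _ hj).trans (hds _ hi).le))
  · exact hyC _ hi _ hj

theorem exists_mem_segment_map_eq (g : Module.Dual 𝕜 E) {c : 𝕜} {v w : E} (hv : c < g v)
    (hw : g w ≤ c) :
    ∃ y ∈ segment 𝕜 v w, g y = c ∧ (g v - g w) • y = (g v - c) • w - (g w - c) • v := by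
  have hpos : 0 < g v - g w := by linarith
  refine ⟨((c - g w) / (g v - g w)) • v + ((g v - c) / (g v - g w)) • w,
    ⟨_, _, div_nonneg (by linarith) hpos.le, div_nonneg (by linarith) hpos.le, ?_, rfl⟩, ?_, ?_⟩
  · field_simp
    ring
  · simp only [map_add, map_smul, smul_eq_mul]
    field_simp
    ring
  · rw [smul_add, smul_smul, smul_smul, mul_div_cancel₀ _ hpos.ne', mul_div_cancel₀ _ hpos.ne']
    module

theorem mem_convexHull_segments_inter_hyperplane {V : Set E} {x : E} (hx : x ∈ convexHull 𝕜 V)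
    (g : Module.Dual 𝕜 E) :
    x ∈ convexHull 𝕜 {y | g y = g x ∧ ∃ v ∈ V, ∃ w ∈ V, y ∈ segment 𝕜 v w} := by
  set S := {y | g y = g x ∧ ∃ v ∈ V, ∃ w ∈ V, y ∈ segment 𝕜 v w}
  obtain ⟨ι, _, z, l, hzV, -, hl, hl1, hlx⟩ := eq_pos_convex_span_of_mem_convexHull hx
  replace hzV (i : ι) : z i ∈ V := hzV ⟨i, rfl⟩
  have hbalance : ∑ i, l i * (g (z i) - g x) = 0 := by
    simp only [mul_sub, Finset.sum_sub_distrib, ← Finset.sum_mul, hl1, ← hlx, map_sum, map_smul,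
      smul_eq_mul, one_mul, sub_self]
  by_cases hlevel : ∀ i, g (z i) = g x
  · rw [← hlx]
    exact (convex_convexHull 𝕜 S).sum_mem (fun i _ ↦ (hl i).le) hl1 fun i _ ↦
      subset_convexHull 𝕜 S ⟨hlevel i, z i, hzV i, z i, hzV i, left_mem_segment 𝕜 _ _⟩
  obtain ⟨k, hk⟩ := not_forall.1 hlevel
  obtain ⟨i, -, hi⟩ := Finset.exists_pos_of_sum_zero_of_exists_nonzero _ hbalance
    ⟨k, Finset.mem_univ k, mul_ne_zero (hl k).ne' (sub_ne_zero.2 hk)⟩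
  set A : Finset ι := {i | g x < g (z i)}
  set B : Finset ι := {i | ¬ g x < g (z i)}
  have hA {i : ι} (hi : i ∈ A) : g x < g (z i) := (Finset.mem_filter.1 hi).2
  have hB {j : ι} (hj : j ∈ B) : g (z j) ≤ g x := not_lt.1 (Finset.mem_filter.1 hj).2
  have hAne : A.Nonempty :=
    ⟨i, Finset.mem_filter.2 ⟨Finset.mem_univ i, sub_pos.1 (pos_of_mul_pos_right hi (hl i).le)⟩⟩
  rw [← Finset.sum_filter_add_sum_filter_not _ (fun i ↦ g x < g (z i))] at hlx hl1 hbalance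
  rw [← hlx]
  refine sum_add_sum_mem_of_crossings_mem (convex_convexHull 𝕜 S) hAne (fun i _ ↦ hl i)
    (fun j _ ↦ (hl j).le) hl1 (fun i hi ↦ sub_pos.2 (hA hi)) (fun j hj ↦ sub_nonpos.2 (hB hj))
    hbalance fun i hi j hj ↦ ?_
  obtain ⟨y, hy, hgy, hcross⟩ := exists_mem_segment_map_eq g (hA hi) (hB hj)
  exact ⟨y, subset_convexHull 𝕜 S ⟨hgy, z i, hzV i, z j, hzV j, hy⟩,
    by rwa [sub_sub_sub_cancel_right]⟩

end HyperplaneSlice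

theorem exists_dual_lt_of_notMem_convexHull {E : Type*} [AddCommGroup E] [Module ℝ E] {W : Set E}
    (hW : W.Finite) {x : E} (hx : x ∉ convexHull ℝ W) :
    ∃ g : Module.Dual ℝ E, ∀ y ∈ convexHull ℝ W, g x < g y := by
  -- The weak topology of the whole algebraic dual makes `E` Hausdorff and locally convex.
  let F := WeakBilin (Module.Dual.eval ℝ E)
  have : T2Space F := (WeakBilin.isEmbedding (Module.eval_apply_injective ℝ)).t2Space
  obtain ⟨g, u, hgx, hgW⟩ := geometric_hahn_banach_point_closed (E := F)
    (convex_convexHull ℝ W) (Set.Finite.isClosed_convexHull (E := F) ℝ hW) hx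
  exact ⟨g.toLinearMap, fun y hy ↦ hgx.trans (hgW y hy)⟩

section Superlevel

theorem exists_isGreatest_superlevel_of_convexOn_Icc {a b r : ℝ} (hab : a ≤ b) {φ : ℝ → ℝ}
    (hφ : ConvexOn ℝ (Set.Icc a b) φ) (ha : r ≤ φ a) :
    ∃ m, IsGreatest {t ∈ Set.Icc a b | r ≤ φ t} m := by
  have haK : a ∈ {t ∈ Set.Icc a b | r ≤ φ t} := ⟨Set.left_mem_Icc.2 hab, ha⟩
  obtain ⟨m, hm⟩ := Real.exists_isLUB ⟨a, haK⟩ ⟨b, fun t ht ↦ ht.1.2⟩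
  have hmIcc : m ∈ Set.Icc a b := ⟨hm.1 haK, hm.2 fun t ht ↦ ht.1.2⟩
  refine ⟨m, ⟨hmIcc, ?_⟩, hm.1⟩
  by_contra! hφm
  have ham : a < m := hmIcc.1.lt_of_ne fun h ↦ hφm.not_ge (h ▸ ha)
  have hdrop : 0 < φ a - φ m := by linarith
  -- The bound is where the chord of `φ` over `[a, m]` crosses the level `r`, which is before `m`.
  have hle : m ≤ a + (m - a) * (φ a - r) / (φ a - φ m) := by
    refine hm.2 fun t ht ↦ ?_
    rw [← sub_le_iff_le_add', le_div_iff₀ hdrop]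
    rcases ht.1.1.eq_or_lt with rfl | hat
    · rw [sub_self, zero_mul]
      exact mul_nonneg (sub_nonneg.2 ham.le) (sub_nonneg.2 ha)
    have htm : t < m := (hm.1 ht).lt_of_ne fun h ↦ hφm.not_ge (h ▸ ht.2)
    nlinarith [hφ.secant_mono_aux1 haK.1 hmIcc hat htm, ht.2]
  rw [← sub_le_iff_le_add', le_div_iff₀ hdrop] at hle
  exact hle.not_gt (mul_lt_mul_of_pos_left (by linarith) (sub_pos.2 ham))

variable {E : Type*} [AddCommGroup E] [Module ℝ E]

theorem exists_finite_subset_superlevel_segment {v w : E} {f : E → ℝ}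
    (hf : ConvexOn ℝ (segment ℝ v w) f) (r : ℝ) :
    ∃ W ⊆ {y ∈ segment ℝ v w | r ≤ f y}, W.Finite ∧
      {y ∈ segment ℝ v w | r ≤ f y} ⊆ convexHull ℝ W := by
  wlog hwv : f w ≤ f v generalizing v w
  · rw [segment_symm] at hf ⊢
    exact this hf (le_of_not_ge hwv)
  rcases lt_or_ge (f v) r with hv | hv
  · refine ⟨∅, Set.empty_subset _, Set.finite_empty, fun y hy ↦ ?_⟩
    have hfy : f y ≤ max (f v) (f w) :=
      hf.le_max_of_mem_segment (left_mem_segment ℝ v w) (right_mem_segment ℝ v w) hy.1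
    rw [max_eq_left hwv] at hfy
    exact absurd hy.2 (hfy.trans_lt hv).not_ge
  · have hφ : ConvexOn ℝ (Set.Icc (0 : ℝ) 1) (f ∘ AffineMap.lineMap v w) := by
      rw [segment_eq_image_lineMap] at hf
      exact (hf.comp_affineMap (AffineMap.lineMap v w)).subset (Set.subset_preimage_image _ _)
        (convex_Icc 0 1)
    obtain ⟨m, ⟨hm, hfm⟩, hmax⟩ := exists_isGreatest_superlevel_of_convexOn_Icc zero_le_one hφ
      (r := r) (by simpa using hv)
    refine ⟨{v, AffineMap.lineMap v w m}, ?_, Set.toFinite _, ?_⟩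
    · rintro _ (rfl | rfl)
      · exact ⟨left_mem_segment ℝ _ _, hv⟩
      · exact ⟨segment_eq_image_lineMap ℝ v w ▸ Set.mem_image_of_mem _ hm, hfm⟩
    · rintro y ⟨hy, hfy⟩
      rw [segment_eq_image_lineMap] at hy
      obtain ⟨t, ht, rfl⟩ := hy
      have htm : t ∈ segment ℝ 0 m := segment_eq_Icc hm.1 ▸ ⟨ht.1, hmax ⟨ht, hfy⟩⟩
      rw [convexHull_pair]
      simpa only [image_segment, AffineMap.lineMap_apply_zero] using
        Set.mem_image_of_mem (AffineMap.lineMap (k := ℝ) v w) htm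

theorem superlevel_convexHull_subset_of_segments {V W : Set E} (hW : W.Finite) {f : E → ℝ}
    (hf : ConvexOn ℝ (convexHull ℝ V) f) {r : ℝ}
    (hseg : ∀ v ∈ V, ∀ w ∈ V, {y ∈ segment ℝ v w | r ≤ f y} ⊆ convexHull ℝ W) :
    {x ∈ convexHull ℝ V | r ≤ f x} ⊆ convexHull ℝ W := by
  rintro x ⟨hxV, hrx⟩
  by_contra hxW
  obtain ⟨g, hg⟩ := exists_dual_lt_of_notMem_convexHull hW hxW
  have hslice : {y | g y = g x ∧ ∃ v ∈ V, ∃ w ∈ V, y ∈ segment ℝ v w} ⊆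
      {y ∈ convexHull ℝ V | f y < r} := by
    rintro y ⟨hgy, v, hv, w, hw, hy⟩
    exact ⟨segment_subset_convexHull hv hw hy,
      not_le.1 fun hry ↦ (hg y (hseg v hv w hw ⟨hy, hry⟩)).ne' hgy⟩
  have hfx : x ∈ {y ∈ convexHull ℝ V | f y < r} :=
    convexHull_min hslice (hf.convex_lt r) (mem_convexHull_segments_inter_hyperplane hxV g)
  exact hfx.2.not_ge hrx

theorem convexHull_polytope_inter_reverse_convex_is_polytope_general {V : Set E} (hV : V.Finite)
    {f : E → ℝ} (hf : ConvexOn ℝ (convexHull ℝ V) f) (r : ℝ) :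
    ∃ W : Set E, W.Finite ∧ convexHull ℝ {x ∈ convexHull ℝ V | r ≤ f x} = convexHull ℝ W := by
  have hseg {v w : E} (hv : v ∈ V) (hw : w ∈ V) : segment ℝ v w ⊆ convexHull ℝ V :=
    segment_subset_convexHull hv hw
  choose! W hWsub hWfin hsubW using fun v w (hv : v ∈ V) (hw : w ∈ V) ↦
    exists_finite_subset_superlevel_segment (hf.subset (hseg hv hw) (convex_segment v w)) r
  have hfin : (⋃ v ∈ V, ⋃ w ∈ V, W v w).Finite :=
    hV.biUnion fun v hv ↦ hV.biUnion fun w hw ↦ hWfin v w hv hw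
  refine ⟨_, hfin, (convexHull_min ?_ (convex_convexHull ℝ _)).antisymm (convexHull_mono ?_)⟩
  · exact superlevel_convexHull_subset_of_segments hfin hf fun v hv w hw ↦
      (hsubW v w hv hw).trans
        (convexHull_mono fun u hu ↦ Set.mem_biUnion hv (Set.mem_biUnion hw hu))
  · simp only [Set.iUnion_subset_iff]
    exact fun v hv w hw u hu ↦ (hWsub v w hv hw hu).imp_left (hseg hv hw ·)

end Superlevel

/-- If `P ⊆ ℝⁿ` is a polytope (the convex hull of a finite set `V`) and `f : ℝⁿ → ℝ` is a
convex function, then `conv({x ∈ P : f(x) ≥ 0})` is again a polytope, i.e. the convex hull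
of some finite set `W`. -/
theorem convexHull_polytope_inter_reverse_convex_is_polytope
    (n : ℕ) (V : Set (Fin n → ℝ)) (hV : V.Finite)
    (f : (Fin n → ℝ) → ℝ) (hf : ConvexOn ℝ Set.univ f) :
    ∃ W : Set (Fin n → ℝ), W.Finite ∧
      convexHull ℝ {x ∈ convexHull ℝ V | 0 ≤ f x} = convexHull ℝ W :=
  convexHull_polytope_inter_reverse_convex_is_polytope_general hV
    (hf.subset (Set.subset_univ _) (convex_convexHull ℝ V)) 0
end
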